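/- Let X ⊆ ℝ^n be a compact basic semi-algebraic set defined by polynomial inequalities g_j(x) ≥ 0 (j ∈ [m]) and polynomial equalities h_i(x) = 0 (i ∈ [p]), and suppose X ⊆ B_R, the closed ball of radius R. Define the semi-algebraic distance function d_X(x) = dist(x, X) and f(x) = max{max_j max(0, -g_j(x)), max_i |h_i(x)|} on B_R. Then there exist constants c > 0 and Ł > 0 such that d_X(x) ≤ c·f(x)^Ł for all x ∈ B_R. -/

import Mathlib

open Metric

/-!
Suppose no exponent works. A sequence of counterexamples then defines a hyperreal point `a` whose
constraint violation is smaller than every power of its distance `d > 0` to `X`. The hyperreals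
bounded by a power of `1 / d` form a convex subring `A`, in which the intermediate value theorem
for polynomials still holds, so `A` is a Henselian local ring; its maximal ideal consists of the
elements smaller than every power of `d`. In characteristic zero the residue field of `A` lifts to
a subfield of `A` containing `ℝ`. Replacing the coordinates of `a` by the lifts of their residues
moves `a` by less than every power of `d`, and turns the negligible violations into zero. The new
point therefore lies in `X`, although it is much closer to `a` than `d`.
-/

open Filter IsLocalRing Polynomial

section CoefficientField

variable {k R : Type*} [Field k] [CommRing R] [Algebra k R]

/-- The residue map is injective on the subalgebra `B`. The maximal such subalgebras serve as
coefficient fields, i.e. as lifts of the residue field. -/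
def MeetsMaximalIdealTrivially [IsLocalRing R] (B : Subalgebra k R) : Prop :=
  ∀ x ∈ B, x ∈ maximalIdeal R → x = 0

namespace MeetsMaximalIdealTrivially

section IsLocalRing

variable [IsLocalRing R] {B : Subalgebra k R}

theorem bot : MeetsMaximalIdealTrivially (⊥ : Subalgebra k R) := by
  intro x hx hxm
  obtain ⟨r, rfl⟩ := Algebra.mem_bot.mp hx
  by_contra hr
  have hr0 : r ≠ 0 := fun h => hr (by rw [h, map_zero])
  exact hxm ((IsUnit.mk0 r hr0).map (algebraMap k R))

theorem sSup {c : Set (Subalgebra k R)} (hc : ∀ B ∈ c, MeetsMaximalIdealTrivially B)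
    (hchain : IsChain (· ≤ ·) c) (hne : c.Nonempty) : MeetsMaximalIdealTrivially (sSup c) := by
  intro x hx hxm
  have := hne.to_subtype
  rw [sSup_eq_iSup', ← SetLike.mem_coe,
    Subalgebra.coe_iSup_of_directed hchain.directedOn.directed_val] at hx
  obtain ⟨C, hxC⟩ := Set.mem_iUnion.mp hx
  exact hc C C.2 x hxC hxm

variable (k R) in
theorem exists_maximal : ∃ B : Subalgebra k R, Maximal MeetsMaximalIdealTrivially B := by
  obtain ⟨B, -, hB⟩ := zorn_le_nonempty₀ {B : Subalgebra k R | MeetsMaximalIdealTrivially B}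
    (fun c hc hchain B hB => ⟨_, sSup hc hchain ⟨B, hB⟩, fun _ => le_sSup⟩) ⊥ bot
  exact ⟨B, hB⟩

theorem mem_of_maximal (hB : Maximal MeetsMaximalIdealTrivially B) {b : R}
    (hb : ∀ P : B[X], aeval b P ∈ maximalIdeal R → aeval b P = 0) : b ∈ B := by
  let C := (Algebra.adjoin B {b}).restrictScalars k
  have hC : MeetsMaximalIdealTrivially C := by
    intro x hx hxm
    rw [Subalgebra.mem_restrictScalars, Algebra.adjoin_singleton_eq_range_aeval] at hx
    obtain ⟨P, rfl⟩ := hx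
    exact hb P hxm
  have hBC : B ≤ C := fun x hx => (Algebra.adjoin B {b}).algebraMap_mem ⟨x, hx⟩
  exact hB.2 hC hBC (Algebra.self_mem_adjoin_singleton B b)

theorem inv_mem_of_maximal (hB : Maximal MeetsMaximalIdealTrivially B) {u : Rˣ}
    (hu : (u : R) ∈ B) : (↑u⁻¹ : R) ∈ B := by
  refine mem_of_maximal hB fun P hP => ?_
  have hreverse : aeval (u : R) P.reverse * (↑u⁻¹ : R) ^ P.natDegree = aeval (↑u⁻¹ : R) P := by
    simpa only [aeval_def, invOf_units, inv_inv] using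
      eval₂_reverse_mul_pow (algebraMap B R) (↑u⁻¹ : R) P
  have hmem : aeval (u : R) P.reverse ∈ B := by
    have := aeval_algebraMap_apply R (⟨u, hu⟩ : B) P.reverse
    exact this ▸ Subtype.property _
  rw [← hreverse, Ideal.mul_unit_mem_iff_mem _ (u⁻¹.isUnit.pow _)] at hP
  rw [← hreverse, hB.1 _ hmem hP, zero_mul]

theorem isField_of_maximal (hB : Maximal MeetsMaximalIdealTrivially B) : IsField B where
  exists_pair_ne := exists_pair_ne B
  mul_comm := mul_comm
  mul_inv_cancel := by
    intro x hx
    obtain ⟨u, hu⟩ : IsUnit (x : R) := by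
      by_contra hxm
      exact hx (Subtype.ext (hB.1 x x.2 hxm))
    exact ⟨⟨_, inv_mem_of_maximal hB (hu ▸ x.2)⟩, Subtype.ext (by simp [← hu])⟩

end IsLocalRing

end MeetsMaximalIdealTrivially

variable [HenselianLocalRing R] [CharZero k]

variable (k) in
theorem exists_residue_eq_and_forall_aeval_eq_zero (α : ResidueField R) :
    ∃ b : R, residue R b = α ∧ ∀ P : k[X], aeval α P = 0 → aeval b P = 0 := by
  by_cases hα : IsIntegral k α
  · have hsimple : aeval α (minpoly k α).derivative ≠ 0 :=
      (minpoly.irreducible hα).separable.aeval_derivative_ne_zero (minpoly.aeval k α)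
    have hensel := ((HenselianLocalRing.TFAE R).out 0 1 rfl rfl).mp inferInstance
    obtain ⟨b, hb_root, hb⟩ := hensel
      ((minpoly k α).map (algebraMap k R)) ((minpoly.monic hα).map _) α
      (by rw [aeval_map_algebraMap, minpoly.aeval])
      (by rwa [derivative_map, aeval_map_algebraMap])
    rw [IsRoot.def, eval_map_algebraMap] at hb_root
    exact ⟨b, hb, fun P hP =>
      aeval_eq_zero_of_dvd_aeval_eq_zero (minpoly.dvd k α hP) hb_root⟩
  · obtain ⟨b, hb⟩ := residue_surjective α
    have htrans : Transcendental k α := fun h => hα h.isIntegral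
    exact ⟨b, hb, fun P hP => by rw [transcendental_iff.mp htrans P hP, map_zero]⟩

theorem MeetsMaximalIdealTrivially.exists_residue_eq_of_maximal {B : Subalgebra k R}
    (hB : Maximal MeetsMaximalIdealTrivially B) (α : ResidueField R) :
    ∃ b ∈ B, residue R b = α := by
  let : Field B := (isField_of_maximal hB).toField
  have : CharZero B := charZero_of_injective_algebraMap (algebraMap k B).injective
  obtain ⟨b, hb, hroot⟩ := exists_residue_eq_and_forall_aeval_eq_zero B α
  refine ⟨b, mem_of_maximal hB fun P hP => hroot P ?_, hb⟩
  rwa [← residue_eq_zero_iff, ← ResidueField.algebraMap_eq, ← aeval_algebraMap_apply,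
    ResidueField.algebraMap_eq, hb] at hP

variable (k R) in
theorem exists_algHom_rightInverse_residue :
    ∃ s : ResidueField R →ₐ[k] R, Function.RightInverse s (residue R) := by
  obtain ⟨B, hB⟩ := MeetsMaximalIdealTrivially.exists_maximal k R
  let ρ : B →ₐ[k] ResidueField R := (IsScalarTower.toAlgHom k R (ResidueField R)).comp B.val
  have hρ : Function.Bijective ρ := by
    refine ⟨(injective_iff_map_eq_zero ρ).mpr fun x hx => ?_, fun α => ?_⟩
    · exact Subtype.ext (hB.1 x x.2 ((residue_eq_zero_iff _).mp hx))
    · obtain ⟨b, hbB, hb⟩ := MeetsMaximalIdealTrivially.exists_residue_eq_of_maximal hB α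
      exact ⟨⟨b, hbB⟩, hb⟩
  let e := AlgEquiv.ofBijective ρ hρ
  exact ⟨B.val.comp e.symm.toAlgHom, e.apply_symm_apply⟩

end CoefficientField

section OrderedRing

variable {R : Type*} [CommRing R] [LinearOrder R]

variable (R) in
/-- The intermediate value theorem for polynomials; among ordered fields, it characterizes the
real closed ones. -/
def PolynomialIVT : Prop :=
  ∀ (P : R[X]) (x y : R), P.eval x * P.eval y ≤ 0 → ∃ z ∈ Set.uIcc x y, P.IsRoot z

theorem abs_lt_one_of_mem_maximalIdeal [IsLocalRing R] (hunit : ∀ x : R, 1 ≤ x → IsUnit x) {x : R}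
    (hx : x ∈ maximalIdeal R) : |x| < 1 := by
  by_contra! h
  have habs := hunit |x| h
  rcases abs_choice x with hx' | hx' <;> rw [hx'] at habs
  · exact hx habs
  · exact hx (IsUnit.neg_iff x |>.mp habs)

variable [IsStrictOrderedRing R]

theorem isLocalRing_of_isUnit_of_one_le (hunit : ∀ x : R, 1 ≤ x → IsUnit x) : IsLocalRing R := by
  refine .of_isUnit_or_isUnit_one_sub_self fun a => ?_
  rcases le_total 1 (2 * a) with ha | ha
  · exact .inl (isUnit_of_mul_isUnit_right (hunit _ ha))
  · exact .inr (isUnit_of_mul_isUnit_right (hunit (2 * (1 - a)) (by linarith)))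

variable [IsLocalRing R]

theorem mem_maximalIdeal_of_abs_le (hunit : ∀ x : R, 1 ≤ x → IsUnit x) {x y : R}
    (hx : x ∈ maximalIdeal R) (hyx : |y| ≤ |x|) : y ∈ maximalIdeal R := by
  intro hy
  obtain ⟨z, hz⟩ := hy.exists_left_inv
  have hzx : |z * x| < 1 := abs_lt_one_of_mem_maximalIdeal hunit (Ideal.mul_mem_left _ z hx)
  have : (1 : R) ≤ |z * x| :=
    calc (1 : R) = |z| * |y| := by rw [← abs_mul, hz, abs_one]
      _ ≤ |z| * |x| := by gcongr
      _ = |z * x| := (abs_mul z x).symm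
  exact this.not_gt hzx

/- With `w` the inverse of the derivative at `a`, the polynomial changes sign between the points
`a ± 2 w P(a)`: to first order, its values there are `3 P(a)` and `-P(a)`. -/
theorem henselianLocalRing_of_polynomialIVT (hunit : ∀ x : R, 1 ≤ x → IsUnit x)
    (ivt : PolynomialIVT R) : HenselianLocalRing R where
  is_henselian P _ a ha hderiv := by
    obtain ⟨w, hw⟩ := hderiv.exists_right_inv
    set e := P.eval a
    let δ := 2 * w * e
    have hδ : δ ∈ maximalIdeal R := Ideal.mul_mem_left _ _ ha
    have habs (r : R) : |r * (2 * w) * δ| < 1 :=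
      abs_lt_one_of_mem_maximalIdeal hunit (Ideal.mul_mem_left _ _ hδ)
    obtain ⟨r, hr⟩ := P.binomExpansion a δ
    obtain ⟨s, hs⟩ := P.binomExpansion a (-δ)
    have hright : P.eval (a + δ) = e * (3 + r * (2 * w) * δ) := by
      linear_combination hr + 2 * e * hw
    have hleft : P.eval (a + -δ) = e * (-1 + s * (2 * w) * δ) := by
      linear_combination hs - 2 * e * hw
    have hsign : P.eval (a + δ) * P.eval (a + -δ) ≤ 0 := by
      rw [hright, hleft, mul_mul_mul_comm]
      have hr_abs := abs_lt.mp (habs r)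
      have hs_abs := abs_lt.mp (habs s)
      exact mul_nonpos_of_nonneg_of_nonpos (mul_self_nonneg e)
        (mul_nonpos_of_nonneg_of_nonpos (by linarith) (by linarith))
    obtain ⟨z, hz, hroot⟩ := ivt P _ _ hsign
    refine ⟨z, hroot, mem_maximalIdeal_of_abs_le hunit hδ ?_⟩
    rcases Set.mem_uIcc.mp hz with h | h <;> rw [abs_le] <;> constructor <;>
      cases abs_cases δ <;> linarith

end OrderedRing

theorem exists_sub_mem_maximalIdeal_and_forall_aeval_nonneg
    {R k σ : Type*} [CommRing R] [LinearOrder R] [IsStrictOrderedRing R] [HenselianLocalRing R]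
    [Field k] [CharZero k] [Algebra k R]
    (hunit : ∀ x : R, 1 ≤ x → IsUnit x) (a : σ → R) :
    ∃ b : σ → R, (∀ i, b i - a i ∈ maximalIdeal R) ∧
      ∀ q : MvPolynomial σ k, ∀ ε ∈ maximalIdeal R,
        -ε ≤ MvPolynomial.aeval a q → 0 ≤ MvPolynomial.aeval b q := by
  obtain ⟨s, hs⟩ := exists_algHom_rightInverse_residue k R
  let π : R →ₐ[k] R := s.comp (IsScalarTower.toAlgHom k R (ResidueField R))
  have hπ_sub (x : R) : π x - x ∈ maximalIdeal R := by
    rw [← residue_eq_zero_iff, map_sub, sub_eq_zero]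
    exact hs (residue R x)
  have hπ_zero {x : R} (hx : x ∈ maximalIdeal R) : π x = 0 := by
    change s (residue R x) = 0
    rw [(residue_eq_zero_iff x).mpr hx, map_zero]
  have hπ_idem (x) : π (π x) = π x := by
    rw [← sub_eq_zero, ← map_sub, hπ_zero (hπ_sub x)]
  refine ⟨fun i => π (a i), fun i => hπ_sub (a i), fun q ε hε hq => ?_⟩
  rw [← MvPolynomial.comp_aeval_apply]
  set y := MvPolynomial.aeval a q
  by_contra! hneg
  have hmem : π y ∈ maximalIdeal R := by
    refine mem_maximalIdeal_of_abs_le hunit (add_mem hε (neg_mem (hπ_sub y))) ?_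
    rw [abs_of_neg hneg]
    exact le_trans (by linarith) (le_abs_self _)
  exact hneg.ne (by rw [← hπ_idem, hπ_zero hmem])

section ConvexSubring

section Ring

variable {H : Type*} [CommRing H] [LinearOrder H] (A : Subring H) [hA : (A : Set H).OrdConnected]

theorem polynomialIVT_of_ordConnected (ivt : PolynomialIVT H) : PolynomialIVT A := by
  intro P x y hxy
  have heval (z : A) : (P.map A.subtype).eval (z : H) = P.eval z :=
    eval_map_apply (f := A.subtype) z
  obtain ⟨z, hz, hroot⟩ := ivt (P.map A.subtype) x y (by rw [heval, heval]; exact hxy)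
  have hzA : z ∈ A := hA.uIcc_subset x.2 y.2 hz
  lift z to A using hzA
  exact ⟨z, hz, Subtype.ext ((heval z).symm.trans hroot)⟩

theorem orderRingHom_mem_of_ordConnected {k : Type*} [Ring k] [LinearOrder k]
    [IsStrictOrderedRing k] [Archimedean k] (c : k →+*o H) (r : k) : c r ∈ A := by
  obtain ⟨n, hn⟩ := exists_nat_ge |r|
  obtain ⟨hlower, hupper⟩ := abs_le.mp hn
  have hc (m : ℤ) : c m ∈ A := (map_intCast c m).symm ▸ intCast_mem A m
  exact hA.out (hc (-n)) (hc n)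
    ⟨c.monotone' (by simpa using hlower), c.monotone' (by simpa using hupper)⟩

end Ring

variable {H : Type*} [Field H] [LinearOrder H] [IsStrictOrderedRing H]

theorem isUnit_of_one_le_of_ordConnected (A : Subring H) [hA : (A : Set H).OrdConnected] (x : A)
    (hx : 1 ≤ x) : IsUnit x := by
  have hx' : 1 ≤ (x : H) := hx
  have hinv : (x : H)⁻¹ ∈ A :=
    hA.out A.zero_mem A.one_mem ⟨by positivity, inv_le_one_of_one_le₀ hx'⟩
  exact .of_mul_eq_one ⟨_, hinv⟩ (Subtype.ext (mul_inv_cancel₀ (by positivity)))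

/-- The convex subring of `H` generated by `t`: the elements bounded by a power of `t`. The
assumption `2 ≤ t` makes this set closed under addition. -/
def powerBounded (t : H) (ht : 2 ≤ t) : Subring H where
  carrier := {x | ∃ N : ℕ, |x| ≤ t ^ N}
  zero_mem' := ⟨0, by simp⟩
  one_mem' := ⟨0, by simp⟩
  neg_mem' := by simp
  mul_mem' := by
    rintro x y ⟨N, hx⟩ ⟨M, hy⟩
    refine ⟨N + M, ?_⟩
    rw [abs_mul, pow_add]
    gcongr
  add_mem' := by
    rintro x y ⟨N, hx⟩ ⟨M, hy⟩
    have ht1 : 1 ≤ t := by linarith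
    refine ⟨max N M + 1, ?_⟩
    calc |x + y| ≤ |x| + |y| := abs_add_le x y
      _ ≤ t ^ max N M + t ^ max N M := by
        gcongr ?_ + ?_
        · exact hx.trans (pow_le_pow_right₀ ht1 (le_max_left N M))
        · exact hy.trans (pow_le_pow_right₀ ht1 (le_max_right N M))
      _ = t ^ max N M * 2 := (mul_two _).symm
      _ ≤ t ^ (max N M + 1) := by rw [pow_succ]; gcongr

namespace powerBounded

variable {t : H} {ht : 2 ≤ t}

instance ordConnected : (powerBounded t ht : Set H).OrdConnected where
  out' := by
    rintro x ⟨N, hx⟩ y ⟨M, hy⟩ z ⟨hxz, hzy⟩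
    rcases le_max_iff.mp (abs_le_max_abs_abs hxz hzy) with hz | hz
    · exact ⟨N, hz.trans hx⟩
    · exact ⟨M, hz.trans hy⟩

theorem self_mem : t ∈ powerBounded t ht := ⟨1, by rw [pow_one, abs_of_nonneg (by linarith)]⟩

theorem mem_maximalIdeal_iff [IsLocalRing (powerBounded t ht)] {x : powerBounded t ht} :
    x ∈ maximalIdeal (powerBounded t ht) ↔ ∀ N : ℕ, |(x : H)| * t ^ N < 1 := by
  have ht0 : 0 < t := by linarith
  constructor
  · intro hx N
    have := abs_lt_one_of_mem_maximalIdeal (isUnit_of_one_le_of_ordConnected _)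
      (Ideal.mul_mem_right (⟨t, self_mem⟩ ^ N) _ hx)
    have : |(x : H) * t ^ N| < 1 := this
    rwa [abs_mul, abs_of_pos (pow_pos ht0 N)] at this
  · rintro hx hunit
    obtain ⟨y, hxy⟩ := hunit.exists_right_inv
    obtain ⟨N, hN⟩ := y.2
    have hxy' : (x : H) * y = 1 := congrArg Subtype.val hxy
    have : 1 ≤ |(x : H)| * t ^ N := by
      calc 1 = |(x : H)| * |(y : H)| := by rw [← abs_mul, hxy', abs_one]
        _ ≤ |(x : H)| * t ^ N := by gcongr
    exact this.not_gt (hx N)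

end powerBounded

theorem exists_forall_eval₂_nonneg_of_negligible_neg_le {k σ : Type*} [Field k] [LinearOrder k]
    [IsStrictOrderedRing k] [Archimedean k] (ivt : PolynomialIVT H) (c : k →+*o H) {t : H}
    (ht : 2 ≤ t) {a : σ → H} (ha : ∀ i, a i ∈ powerBounded t ht) {e : H}
    (he : ∀ N : ℕ, |e| * t ^ N < 1) :
    ∃ b : σ → H, (∀ i, ∀ N : ℕ, |b i - a i| * t ^ N < 1) ∧
      ∀ q : MvPolynomial σ k, -e ≤ q.eval₂ c a → 0 ≤ q.eval₂ c b := by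
  let A := powerBounded t ht
  have hunit := isUnit_of_one_le_of_ordConnected A
  have := isLocalRing_of_isUnit_of_one_le hunit
  have := henselianLocalRing_of_polynomialIVT hunit (polynomialIVT_of_ordConnected A ivt)
  let : Algebra k A :=
    ((c : k →+* H).codRestrict A (orderRingHom_mem_of_ordConnected A c)).toAlgebra
  have haeval (z : σ → A) (q : MvPolynomial σ k) :
      (MvPolynomial.aeval z q : H) = q.eval₂ c fun i => (z i : H) :=
    MvPolynomial.map_aeval _ A.subtype q
  have heA : e ∈ A := ⟨0, by simpa using (he 0).le⟩
  obtain ⟨b, hba, hb⟩ := exists_sub_mem_maximalIdeal_and_forall_aeval_nonneg (k := k) hunit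
    fun i => (⟨a i, ha i⟩ : A)
  refine ⟨fun i => b i, fun i => powerBounded.mem_maximalIdeal_iff.mp (hba i), fun q hq => ?_⟩
  rw [← haeval]
  exact hb q ⟨e, heA⟩ (powerBounded.mem_maximalIdeal_iff.mpr he)
    (Subtype.coe_le_coe.mp ((haeval _ q).symm ▸ hq))

end ConvexSubring

section Hyperreal

open Hyperreal

theorem exists_eval_ofSeq_eq (P : ℝ*[X]) :
    ∃ Q : ℕ → ℝ[X], ∀ x, P.eval (ofSeq x) = ofSeq fun i => (Q i).eval (x i) := by
  induction P using Polynomial.induction_on' with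
  | add p q hp hq =>
    obtain ⟨P, hP⟩ := hp
    obtain ⟨Q, hQ⟩ := hq
    refine ⟨fun i => P i + Q i, fun x => ?_⟩
    simp only [eval_add, hP, hQ]
    rfl
  | monomial n a =>
    obtain ⟨a, rfl⟩ := ofSeq_surjective a
    refine ⟨fun i => monomial n (a i), fun x => ?_⟩
    simp only [eval_monomial]
    rfl

theorem polynomialIVT_real : PolynomialIVT ℝ := by
  intro P x y hxy
  have hzero : 0 ∈ Set.uIcc (P.eval x) (P.eval y) := by
    rw [Set.mem_uIcc]
    rcases mul_nonpos_iff.mp hxy with h | h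
    · exact .inr h.symm
    · exact .inl h
  exact intermediate_value_uIcc P.continuous.continuousOn hzero

theorem polynomialIVT_hyperreal : PolynomialIVT ℝ* := by
  intro P x y hxy
  obtain ⟨Q, hQ⟩ := exists_eval_ofSeq_eq P
  obtain ⟨x, rfl⟩ := ofSeq_surjective x
  obtain ⟨y, rfl⟩ := ofSeq_surjective y
  rw [hQ, hQ] at hxy
  have hroots : ∀ᶠ i in hyperfilter ℕ, ∃ z ∈ Set.uIcc (x i) (y i), (Q i).IsRoot z :=
    (ofSeq_le_ofSeq (g := fun _ => 0).mp hxy).mono fun i => polynomialIVT_real (Q i) (x i) (y i)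
  obtain ⟨z, hz⟩ := Filter.skolem.mp hroots
  refine ⟨ofSeq z, ⟨?_, ?_⟩, ?_⟩
  · have hmin : ofSeq x ⊓ ofSeq y = ofSeq fun i => min (x i) (y i) := Germ.min_def _ _
    rw [hmin, ofSeq_le_ofSeq]
    exact hz.mono fun i hi => hi.1.1
  · have hmax : ofSeq x ⊔ ofSeq y = ofSeq fun i => max (x i) (y i) := Germ.max_def _ _
    rw [hmax, ofSeq_le_ofSeq]
    exact hz.mono fun i hi => hi.1.2
  · rw [IsRoot.def, hQ]
    exact Germ.coe_eq.mpr (hz.mono fun i hi => hi.2)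

theorem eval₂_coeRingHom_ofSeq {σ : Type*} (x : ℕ → σ → ℝ) (q : MvPolynomial σ ℝ) :
    MvPolynomial.eval₂ (coeRingHom : ℝ →+* ℝ*) (fun k => ofSeq fun i => x i k) q =
      ofSeq fun i => MvPolynomial.eval (x i) q := by
  induction q using MvPolynomial.induction_on with
  | C r => simp only [MvPolynomial.eval₂_C, MvPolynomial.eval_C]; rfl
  | add p q hp hq => simp only [MvPolynomial.eval₂_add, hp, hq, map_add]; rfl
  | mul_X p k hp =>
    simp only [MvPolynomial.eval₂_mul, MvPolynomial.eval₂_X, hp, map_mul, MvPolynomial.eval_X]; rfl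

theorem exists_forall_eval_nonneg_of_eventually_neg_le {σ : Type*} {x : ℕ → σ → ℝ} {r : ℝ}
    (hx : ∀ i k, |x i k| ≤ r) {t e : ℕ → ℝ} (ht : ∀ᶠ i in hyperfilter ℕ, 2 ≤ t i)
    (he : ∀ N, ∀ᶠ i in hyperfilter ℕ, |e i| * t i ^ N < 1) :
    ∃ y : ℕ → σ → ℝ, (∀ k N, ∀ᶠ i in hyperfilter ℕ, |y i k - x i k| * t i ^ N < 1) ∧
      ∀ q : MvPolynomial σ ℝ, (∀ᶠ i in hyperfilter ℕ, -e i ≤ MvPolynomial.eval (x i) q) →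
        ∀ᶠ i in hyperfilter ℕ, 0 ≤ MvPolynomial.eval (y i) q := by
  have hT : 2 ≤ ofSeq t := ofSeq_le_ofSeq (f := fun _ => 2).mpr ht
  have hreal := orderRingHom_mem_of_ordConnected (powerBounded _ hT) coeRingHom
  have hxT (k : σ) : (ofSeq fun i => x i k) ∈ powerBounded _ hT :=
    powerBounded.ordConnected.out (hreal (-r)) (hreal r)
      ⟨ofSeq_le_ofSeq.mpr (.of_forall fun i => (abs_le.mp (hx i k)).1),
        ofSeq_le_ofSeq.mpr (.of_forall fun i => (abs_le.mp (hx i k)).2)⟩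
  have heT (N : ℕ) : |ofSeq e| * ofSeq t ^ N < 1 :=
    ofSeq_lt_ofSeq (f := fun i => |e i| * t i ^ N) (g := fun _ => 1).mpr (he N)
  obtain ⟨b, hbx, hb⟩ := exists_forall_eval₂_nonneg_of_negligible_neg_le polynomialIVT_hyperreal
    coeRingHom hT hxT heT
  choose y hy using fun k => ofSeq_surjective (b k)
  obtain rfl : (fun k => ofSeq (y k)) = b := funext hy
  refine ⟨fun i k => y k i, fun k N => ?_, fun q hq => ?_⟩
  · exact ofSeq_lt_ofSeq (f := fun i => |y k i - x i k| * t i ^ N) (g := fun _ => 1).mp (hbx k N)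
  · have hnonneg := hb q (by
      refine le_of_le_of_eq ?_ (eval₂_coeRingHom_ofSeq x q).symm
      exact ofSeq_le_ofSeq (f := fun i => -e i).mpr hq)
    replace hnonneg := hnonneg.trans_eq (eval₂_coeRingHom_ofSeq (fun i k => y k i) q)
    exact ofSeq_le_ofSeq (f := fun _ => 0).mp hnonneg

end Hyperreal

section Lojasiewicz

variable {σ ι κ : Type*}

/-- The set cut out by the inequalities `g j ≥ 0` and the equations `h i = 0`. -/
def basicSemialgebraicSet (g : ι → MvPolynomial σ ℝ) (h : κ → MvPolynomial σ ℝ) :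
    Set (EuclideanSpace ℝ σ) :=
  {x | (∀ j, 0 ≤ MvPolynomial.eval (fun i => x i) (g j)) ∧
    ∀ i, MvPolynomial.eval (fun i => x i) (h i) = 0}

variable [Fintype ι] [Fintype κ]

/-- The largest amount by which a constraint `g j ≥ 0` or `h i = 0` fails at `x`; inserting `0`
gives it the value `0` when there are no constraints. -/
noncomputable def constraintViolation (g : ι → MvPolynomial σ ℝ) (h : κ → MvPolynomial σ ℝ)
    (x : EuclideanSpace ℝ σ) : ℝ :=
  (insert (0 : ℝ)
      (((Finset.univ : Finset ι).image
          (fun j => max 0 (-MvPolynomial.eval (fun i => x i) (g j)))) ∪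
        ((Finset.univ : Finset κ).image
          (fun i' => |MvPolynomial.eval (fun i => x i) (h i')|)))).max'
    (Finset.insert_nonempty _ _)

variable (g : ι → MvPolynomial σ ℝ) (h : κ → MvPolynomial σ ℝ)

theorem constraintViolation_nonneg (x : EuclideanSpace ℝ σ) : 0 ≤ constraintViolation g h x :=
  Finset.le_max' _ _ (Finset.mem_insert_self _ _)

theorem neg_constraintViolation_le_eval (x : EuclideanSpace ℝ σ) (j : ι) :
    -constraintViolation g h x ≤ MvPolynomial.eval (fun i => x i) (g j) := by
  have hle : max 0 (-MvPolynomial.eval (fun i => x i) (g j)) ≤ constraintViolation g h x :=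
    Finset.le_max' _ _ (by simp)
  linarith [le_max_right 0 (-MvPolynomial.eval (fun i => x i) (g j))]

theorem abs_eval_le_constraintViolation (x : EuclideanSpace ℝ σ) (j : κ) :
    |MvPolynomial.eval (fun i => x i) (h j)| ≤ constraintViolation g h x :=
  Finset.le_max' _ _ (by simp)

theorem exists_mem_basicSemialgebraicSet_of_constraintViolation_mul_pow_lt_one [Finite σ]
    {x : ℕ → EuclideanSpace ℝ σ} {r : ℝ} (hx : ∀ i k, |x i k| ≤ r) {t : ℕ → ℝ}
    (ht : ∀ i, 2 ≤ t i) (hviol : ∀ i, constraintViolation g h (x i) * t i ^ i < 1) :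
    ∃ i, ∃ y ∈ basicSemialgebraicSet g h, ∀ k, |y k - x i k| * t i < 1 := by
  have hsmall (N : ℕ) :
      ∀ᶠ i in hyperfilter ℕ, |constraintViolation g h (x i)| * t i ^ N < 1 := by
    filter_upwards [Nat.hyperfilter_le_atTop (eventually_ge_atTop N)] with i hi
    rw [abs_of_nonneg (constraintViolation_nonneg g h _)]
    refine (mul_le_mul_of_nonneg_left ?_ (constraintViolation_nonneg g h _)).trans_lt (hviol i)
    exact pow_le_pow_right₀ (by linarith [ht i]) hi
  obtain ⟨y, hyx, hy⟩ := exists_forall_eval_nonneg_of_eventually_neg_le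
    (x := fun i k => x i k) hx (.of_forall ht) hsmall
  have hg (j : ι) : ∀ᶠ i in hyperfilter ℕ, 0 ≤ MvPolynomial.eval (y i) (g j) :=
    hy _ (.of_forall fun i => neg_constraintViolation_le_eval g h (x i) j)
  have hh (j : κ) : ∀ᶠ i in hyperfilter ℕ, MvPolynomial.eval (y i) (h j) = 0 := by
    have habs i := abs_le.mp (abs_eval_le_constraintViolation g h (x i) j)
    filter_upwards [hy (h j) (.of_forall fun i => (habs i).1),
      hy (-h j) (.of_forall fun i => by simpa using (habs i).2)] with i hpos hneg
    exact le_antisymm (by simpa using hneg) hpos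
  obtain ⟨i, hgi, hhi, hyi⟩ := ((eventually_all.mpr hg).and ((eventually_all.mpr hh).and
    (eventually_all.mpr fun k => hyx k 1))).exists
  exact ⟨i, WithLp.toLp 2 (y i), ⟨hgi, hhi⟩, by simpa only [pow_one] using hyi⟩

variable [Fintype σ]

theorem dist_mul_sq_le_card {x y : EuclideanSpace ℝ σ} {t : ℝ} (ht : 0 ≤ t)
    (hxy : ∀ k, |y k - x k| * t ≤ 1) : (dist x y * t) ^ 2 ≤ Fintype.card σ := by
  rw [mul_pow, EuclideanSpace.dist_eq, Real.sq_sqrt (by positivity), Finset.sum_mul]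
  calc ∑ k, dist (x k) (y k) ^ 2 * t ^ 2 ≤ ∑ _k : σ, (1 : ℝ) := by
        gcongr with k
        rw [← mul_pow, dist_comm, Real.dist_eq]
        exact pow_le_one₀ (by positivity) (hxy k)
    _ = Fintype.card σ := by simp

theorem exists_infDist_mul_sq_le_card_of_constraintViolation_mul_pow_lt_one
    {x : ℕ → EuclideanSpace ℝ σ} {r : ℝ} (hx : ∀ i, ‖x i‖ ≤ r) {t : ℕ → ℝ} (ht : ∀ i, 2 ≤ t i)
    (hviol : ∀ i, constraintViolation g h (x i) * t i ^ i < 1) :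
    ∃ i, (infDist (x i) (basicSemialgebraicSet g h) * t i) ^ 2 ≤ Fintype.card σ := by
  obtain ⟨i, y, hy, hyx⟩ :=
    exists_mem_basicSemialgebraicSet_of_constraintViolation_mul_pow_lt_one g h
      (fun i k => (PiLp.norm_apply_le (x i) k).trans (hx i)) ht hviol
  have ht0 : 0 ≤ t i := by linarith [ht i]
  refine ⟨i, le_trans ?_ (dist_mul_sq_le_card ht0 fun k => (hyx k).le)⟩
  gcongr
  · exact mul_nonneg infDist_nonneg ht0
  · exact infDist_le_dist_of_mem hy

/- The constant `M` makes `t = M / infDist x X` at least `2` throughout `B`, and its square exceeds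
the dimension, so that no point of `X` lies within `1 / t` of `x` in every coordinate. -/
theorem exists_infDist_div_pow_le_constraintViolation
    (hne : (basicSemialgebraicSet g h).Nonempty)
    {B : Set (EuclideanSpace ℝ σ)} (hB : Bornology.IsBounded B) :
    ∃ M > 0, ∃ N : ℕ, ∀ x ∈ B,
      (infDist x (basicSemialgebraicSet g h) / M) ^ (N + 1) ≤ constraintViolation g h x := by
  obtain ⟨p, hp⟩ := hne
  obtain ⟨r, hr⟩ := hB.subset_closedBall p
  obtain ⟨ρ, hρ⟩ := hB.exists_norm_le
  let M := max (2 * r) (Fintype.card σ + 1)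
  have hcard : Fintype.card σ + 1 ≤ M := le_max_right _ _
  have hM : 0 < M := by positivity
  refine ⟨M, hM, ?_⟩
  by_contra! hcon
  choose x hxB hx using hcon
  let D (i : ℕ) : ℝ := infDist (x i) (basicSemialgebraicSet g h)
  have hDpos (i : ℕ) : 0 < D i := by
    refine infDist_nonneg.lt_of_ne' fun hzero => ?_
    have := hx i
    rw [hzero, zero_div, zero_pow i.succ_ne_zero] at this
    exact (constraintViolation_nonneg g h (x i)).not_gt this
  have ht (i : ℕ) : 2 ≤ M / D i := by
    rw [le_div_iff₀ (hDpos i)]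
    have : D i ≤ r := (infDist_le_dist_of_mem hp).trans (hr (hxB i))
    linarith [le_max_left (2 * r) (Fintype.card σ + 1)]
  have hviol (i : ℕ) : constraintViolation g h (x i) * (M / D i) ^ i < 1 := by
    rw [← lt_div_iff₀ (pow_pos (by linarith [ht i]) i), one_div, ← inv_pow, inv_div]
    refine (hx i).trans_le (pow_le_pow_of_le_one (div_nonneg (hDpos i).le hM.le) ?_ i.le_succ)
    rw [← inv_div]
    exact inv_le_one_of_one_le₀ (by linarith [ht i])
  obtain ⟨i, hi⟩ := exists_infDist_mul_sq_le_card_of_constraintViolation_mul_pow_lt_one g h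
    (fun i => hρ _ (hxB i)) ht hviol
  have hM_sq : M ^ 2 ≤ Fintype.card σ := by rwa [mul_div_cancel₀ M (hDpos i).ne'] at hi
  nlinarith

theorem stmt_9_general (hne : (basicSemialgebraicSet g h).Nonempty)
    {B : Set (EuclideanSpace ℝ σ)} (hB : Bornology.IsBounded B) :
    ∃ c > (0 : ℝ), ∃ L > (0 : ℝ), ∀ x ∈ B,
      infDist x (basicSemialgebraicSet g h) ≤ c * constraintViolation g h x ^ L := by
  obtain ⟨M, hM, N, hN⟩ := exists_infDist_div_pow_le_constraintViolation g h hne hB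
  refine ⟨M, hM, ((N + 1 : ℕ) : ℝ)⁻¹, by positivity, fun x hx => ?_⟩
  rw [← div_le_iff₀' hM, Real.le_rpow_inv_iff_of_pos (div_nonneg infDist_nonneg hM.le)
    (constraintViolation_nonneg g h x) (by positivity), Real.rpow_natCast]
  exact hN x hx

end Lojasiewicz

/-- Łojasiewicz inequality for a compact basic semi-algebraic set
X = {x : g_j(x) ≥ 0 ∀j, h_i(x) = 0 ∀i} ⊆ B_R: there are c > 0 and Ł > 0 with
dist(x, X) ≤ c · f(x)^Ł on B_R, where f measures the constraint violation. -/
theorem stmt_9 (n m p : ℕ) (R : ℝ) (hR : 0 < R)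
    (g : Fin m → MvPolynomial (Fin n) ℝ) (h : Fin p → MvPolynomial (Fin n) ℝ)
    (X : Set (EuclideanSpace ℝ (Fin n)))
    (hXdef : X = {x | (∀ j, 0 ≤ MvPolynomial.eval (fun i => x i) (g j)) ∧
        ∀ i, MvPolynomial.eval (fun i => x i) (h i) = 0})
    (hXc : IsCompact X) (hXne : X.Nonempty)
    (hXR : X ⊆ closedBall 0 R)
    (f : EuclideanSpace ℝ (Fin n) → ℝ)
    (hf : ∀ x, f x =
      (insert (0 : ℝ)
          (((Finset.univ : Finset (Fin m)).image
              (fun j => max 0 (-MvPolynomial.eval (fun i => x i) (g j)))) ∪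
            ((Finset.univ : Finset (Fin p)).image
              (fun i' => |MvPolynomial.eval (fun i => x i) (h i')|)))).max'
        (Finset.insert_nonempty _ _)) :
    ∃ c > (0 : ℝ), ∃ L > (0 : ℝ),
      ∀ x ∈ closedBall (0 : EuclideanSpace ℝ (Fin n)) R,
        infDist x X ≤ c * f x ^ L := by
  subst hXdef
  obtain rfl : f = constraintViolation g h := funext hf
  exact stmt_9_general g h hXne isBounded_closedBall
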